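/- For n ≤ m/2, the capacity of the additive-multiplicative matrix channel Y = A(X+W), with A uniform over invertible n×n matrices and W uniform over n×m matrices of rank t (independent of each other and of X), satisfies C ≤ (m-n)(n-t) + log_q(4(1+n)(1+t)). -/

import Mathlib

open scoped BigOperators

/-- Mutual information (logarithm base `b`) between the input and output of a discrete
memoryless channel with finite input alphabet `α`, finite output alphabet `β`, transition
probabilities `K` and input distribution `p`. -/
noncomputable def mutualInfoB {α β : Type*} [Fintype α] [Fintype β]
    (b : ℝ) (p : α → ℝ) (K : α → β → ℝ) : ℝ :=
  ∑ x : α, ∑ y : β, p x * K x y *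
    Real.logb b (K x y / ∑ x' : α, p x' * K x' y)

/-- The capacity (in base-`b` units) of a discrete channel with transition probabilities `K`:
the supremum of the mutual information over all input distributions. -/
noncomputable def capacityB {α β : Type*} [Fintype α] [Fintype β]
    (b : ℝ) (K : α → β → ℝ) : ℝ :=
  sSup {c : ℝ | ∃ p : α → ℝ, (∀ x, 0 ≤ p x) ∧ (∑ x : α, p x) = 1 ∧ c = mutualInfoB b p K}


/-- Transition probabilities of the additive-multiplicative matrix channel `Y = A(X + W)`,
where `A` is uniform over `GL_n(F_q)` and `W` is uniform over the `n × m` matrices of rank `t`,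
independent of each other and of `X`. -/
noncomputable def ammcKernel (F : Type) [Field F] [Fintype F] (n m t : ℕ)
    (X Y : Matrix (Fin n) (Fin m) F) : ℝ :=
  (Nat.card {p : Matrix.GeneralLinearGroup (Fin n) F ×
        {W : Matrix (Fin n) (Fin m) F // W.rank = t} //
      (p.1 : Matrix (Fin n) (Fin n) F) * (X + (p.2 : Matrix (Fin n) (Fin m) F)) = Y} : ℝ) /
    ((Nat.card (Matrix.GeneralLinearGroup (Fin n) F) : ℝ) *
      (Nat.card {W : Matrix (Fin n) (Fin m) F // W.rank = t} : ℝ))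

/-!
If `K x y ≤ M y` for every input `x`, then comparing the output distribution with `M / ∑ M` gives
`C ≤ log_q (∑ y, M y)`. For the matrix channel, left multiplication by `GL_n` makes `K X ·`
constant on the matrices with a given null space, so `K X Y * #{M | ker M = ker Y}` is the
proportion of the matrices `W` of rank `t` for which `ker (X + W) = ker Y`.

For `E = ker Y` of codimension `u` and `a = dim X E`, every such `W` has rank at least `a`; with
`t = s + a`, the `W` such that `X + W` vanishes on `E` are counted exactly by Gaussian coefficients.
The identity `[m, u] [u, s] = [m, s] [m - s, u - s]` then yields
`K X Y ≤ 4 (1 + t) q ^ ((m - n) (n - t)) / #{M | rank M = u}`. Each of the `n + 1` values of `u`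
contributes the same amount to `∑ M`, whence the factor `1 + n`.
-/

/-- The Gaussian binomial coefficient `[n, k]_q`, defined by the `q`-Pascal recursion so that it
makes sense in every semiring. -/
def gaussBinom {R : Type*} [Semiring R] (q : R) : ℕ → ℕ → R
  | _, 0 => 1
  | 0, _ + 1 => 0
  | n + 1, k + 1 => gaussBinom q n k + q ^ (k + 1) * gaussBinom q n (k + 1)

/-- The product `∏_{i < k} (q ^ n - q ^ i)`, an unnormalized `q`-analogue of the descending
factorial. For a prime power `q` it counts the injective linear maps `F_q ^ k → F_q ^ n`. -/
def qDescFactorial {R : Type*} [CommRing R] (q : R) (n k : ℕ) : R :=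
  ∏ i ∈ Finset.range k, (q ^ n - q ^ i)

section GaussBinom

variable {R : Type*} [Semiring R] (q : R)

@[simp] lemma gaussBinom_zero_right (n : ℕ) : gaussBinom q n 0 = 1 := by
  cases n <;> rfl

lemma gaussBinom_eq_zero_of_lt {n k : ℕ} (h : n < k) : gaussBinom q n k = 0 := by
  induction n generalizing k with
  | zero => obtain ⟨k, rfl⟩ := Nat.exists_eq_succ_of_ne_zero h.ne'; rfl
  | succ n ih =>
    obtain ⟨k, rfl⟩ := Nat.exists_eq_succ_of_ne_zero (Nat.ne_zero_of_lt h)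
    simp only [gaussBinom, ih (show n < k by omega), ih (show n < k + 1 by omega), mul_zero,
      add_zero]

lemma gaussBinom_self (n : ℕ) : gaussBinom q n n = 1 := by
  induction n with
  | zero => rfl
  | succ n ih => simp [gaussBinom, ih, gaussBinom_eq_zero_of_lt q (Nat.lt_succ_self n)]

lemma gaussBinom_nonneg [PartialOrder R] [IsOrderedRing R] {q : R} (hq : 0 ≤ q) (n k : ℕ) :
    0 ≤ gaussBinom q n k := by
  induction n generalizing k with
  | zero => cases k <;> simp [gaussBinom]
  | succ n ih =>
    cases k with
    | zero => simp
    | succ k => exact add_nonneg (ih k) (mul_nonneg (pow_nonneg hq _) (ih (k + 1)))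

end GaussBinom

section QDescFactorial

variable {R : Type*} [CommRing R] (q : R)

@[simp] lemma qDescFactorial_zero_right (n : ℕ) : qDescFactorial q n 0 = 1 :=
  Finset.prod_range_zero _

lemma qDescFactorial_succ_right (n k : ℕ) :
    qDescFactorial q n (k + 1) = qDescFactorial q n k * (q ^ n - q ^ k) :=
  Finset.prod_range_succ _ _

lemma qDescFactorial_add_add (n a s : ℕ) :
    qDescFactorial q (a + n) (a + s) =
      qDescFactorial q (a + n) a * (q ^ (a * s) * qDescFactorial q n s) := by
  simp only [qDescFactorial, Finset.prod_range_add, pow_mul, pow_add, ← mul_sub,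
    Finset.prod_mul_distrib, Finset.prod_const, Finset.card_range]

lemma qDescFactorial_succ_succ (n k : ℕ) :
    qDescFactorial q (n + 1) (k + 1) = (q ^ (n + 1) - 1) * (q ^ k * qDescFactorial q n k) := by
  simpa [qDescFactorial, add_comm] using qDescFactorial_add_add q n 1 k

lemma gaussBinom_mul_qDescFactorial_self (n k : ℕ) :
    gaussBinom q n k * qDescFactorial q k k = qDescFactorial q n k := by
  induction n generalizing k with
  | zero =>
    cases k with
    | zero => simp
    | succ k => simp [gaussBinom_eq_zero_of_lt, qDescFactorial, Finset.prod_range_succ']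
  | succ n ih =>
    cases k with
    | zero => simp
    | succ k =>
      calc gaussBinom q (n + 1) (k + 1) * qDescFactorial q (k + 1) (k + 1)
          = (q ^ (k + 1) - 1) * q ^ k * (gaussBinom q n k * qDescFactorial q k k) +
              q ^ (k + 1) * (gaussBinom q n (k + 1) * qDescFactorial q (k + 1) (k + 1)) := by
            rw [gaussBinom, add_mul, qDescFactorial_succ_succ]; ring
        _ = (q ^ (k + 1) - 1) * q ^ k * qDescFactorial q n k +
              q ^ (k + 1) * (qDescFactorial q n k * (q ^ n - q ^ k)) := by
            rw [ih, ih, qDescFactorial_succ_right]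
        _ = qDescFactorial q (n + 1) (k + 1) := by
            rw [qDescFactorial_succ_succ]; ring

end QDescFactorial

section Estimates

variable {R : Type*} [Field R] [LinearOrder R] [IsStrictOrderedRing R] {q : R}

lemma qDescFactorial_pos (hq : 1 < q) {n k : ℕ} (h : k ≤ n) : 0 < qDescFactorial q n k :=
  Finset.prod_pos fun _ hi => sub_pos.2 <|
    pow_lt_pow_right₀ hq ((Finset.mem_range.1 hi).trans_le h)

lemma gaussBinom_eq_div (hq : 1 < q) (n k : ℕ) :
    gaussBinom q n k = qDescFactorial q n k / qDescFactorial q k k :=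
  eq_div_of_mul_eq (qDescFactorial_pos hq le_rfl).ne' (gaussBinom_mul_qDescFactorial_self q n k)

lemma gaussBinom_pos (hq : 1 < q) {n k : ℕ} (h : k ≤ n) : 0 < gaussBinom q n k := by
  rw [gaussBinom_eq_div hq]
  exact div_pos (qDescFactorial_pos hq h) (qDescFactorial_pos hq le_rfl)

lemma gaussBinom_mul_gaussBinom (hq : 1 < q) {n k s : ℕ} (hkn : k ≤ n) (hsk : s ≤ k) :
    gaussBinom q n k * gaussBinom q k s = gaussBinom q n s * gaussBinom q (n - s) (k - s) := by
  obtain ⟨w, rfl⟩ := Nat.exists_eq_add_of_le hsk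
  obtain ⟨v, rfl⟩ := Nat.exists_eq_add_of_le hkn
  have hs := (qDescFactorial_pos hq (le_refl s)).ne'
  have hw := (qDescFactorial_pos hq (le_refl w)).ne'
  have hsw := (qDescFactorial_pos hq (Nat.le_add_right s w)).ne'
  have : q ≠ 0 := (one_pos.trans hq).ne'
  rw [add_tsub_cancel_left, add_assoc, add_tsub_cancel_left]
  simp only [gaussBinom_eq_div hq, qDescFactorial_add_add]
  field_simp

lemma qDescFactorial_le_pow (hq : 1 < q) {n k : ℕ} (h : k ≤ n) :
    qDescFactorial q n k ≤ q ^ (n * k) := by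
  have : 0 < q := one_pos.trans hq
  calc qDescFactorial q n k ≤ ∏ _i ∈ Finset.range k, q ^ n :=
        Finset.prod_le_prod
          (fun i hi => sub_nonneg.2 <|
            pow_le_pow_right₀ hq.le ((Finset.mem_range.1 hi).trans_le h).le)
          fun i _ => sub_le_self _ (by positivity)
    _ = q ^ (n * k) := by rw [Finset.prod_const, Finset.card_range, pow_mul]

lemma add_two_le_pow_succ (hq : 2 ≤ q) (k : ℕ) : (k + 2 : R) ≤ q ^ (k + 1) :=
  calc (k + 2 : R) ≤ 2 ^ (k + 1) := by
        exact_mod_cast Nat.succ_le_of_lt (Nat.lt_two_pow_self (n := k + 1))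
    _ ≤ q ^ (k + 1) := by gcongr

lemma pow_le_succ_mul_qDescFactorial (hq : 2 ≤ q) {n k : ℕ} (h : k ≤ n) :
    q ^ (n * k) ≤ (1 + k) * qDescFactorial q n k := by
  have hq1 : 1 ≤ q := one_le_two.trans hq
  induction n generalizing k with
  | zero => simp [Nat.le_zero.1 h]
  | succ n ih =>
    cases k with
    | zero => simp
    | succ k =>
      have hpow : (k + 2 : R) ≤ q ^ (n + 1) :=
        (add_two_le_pow_succ hq k).trans (pow_le_pow_right₀ hq1 h)
      have hfactor : (1 + k) * q ^ (n + 1) ≤ (1 + (k + 1 : ℕ)) * (q ^ (n + 1) - 1) := by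
        push_cast; linarith
      have hpos := qDescFactorial_pos (one_lt_two.trans_le hq) (Nat.succ_le_succ_iff.1 h)
      calc q ^ ((n + 1) * (k + 1)) = q ^ (n * k) * (q ^ (n + 1) * q ^ k) := by ring
        _ ≤ (1 + k) * qDescFactorial q n k * (q ^ (n + 1) * q ^ k) := by
          gcongr; exact ih (Nat.succ_le_succ_iff.1 h)
        _ = (1 + k) * q ^ (n + 1) * (q ^ k * qDescFactorial q n k) := by ring
        _ ≤ (1 + (k + 1 : ℕ)) * (q ^ (n + 1) - 1) * (q ^ k * qDescFactorial q n k) := by gcongr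
        _ = (1 + (k + 1 : ℕ)) * qDescFactorial q (n + 1) (k + 1) := by
          rw [qDescFactorial_succ_succ]; ring

/-- The summand `(1 / 2) ^ (k + 2)` only serves to make the induction on `k` go through. -/
lemma quarter_add_mul_pow_le_qDescFactorial (hq : 2 ≤ q) {n k : ℕ} (h : k ≤ n) :
    (1 / 4 + (1 / 2) ^ (k + 2)) * q ^ ((n + 1) * (k + 1)) ≤
      qDescFactorial q (n + 1) (k + 1) := by
  have hq1 : 1 ≤ q := one_le_two.trans hq
  have hone_sub (k n : ℕ) (h : k ≤ n) :
      (1 - (1 / 2) ^ (k + 1)) * q ^ (n + 1) ≤ q ^ (n + 1) - 1 := by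
    have : (2 : R) ^ (k + 1) ≤ q ^ (n + 1) :=
      (pow_le_pow_left₀ zero_le_two hq _).trans (pow_le_pow_right₀ hq1 (by omega))
    rw [sub_mul, one_mul, one_div, inv_pow, inv_mul_eq_div]
    gcongr
    rwa [one_le_div (by positivity)]
  induction k generalizing n with
  | zero => simpa [qDescFactorial] using (by norm_num : _ ≤ _).trans (hone_sub 0 n h)
  | succ k ih =>
    obtain ⟨n, rfl⟩ := Nat.exists_eq_succ_of_ne_zero (Nat.ne_zero_of_lt h)
    have hc : (1 / 4 + (1 / 2) ^ (k + 1 + 2) : R) ≤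
        (1 / 4 + (1 / 2) ^ (k + 2)) * (1 - (1 / 2) ^ (k + 1 + 1)) := by
      have : (1 / 2 : R) ^ (k + 2) ≤ (1 / 2) ^ 2 :=
        pow_le_pow_of_le_one (by norm_num) (by norm_num) (by omega)
      have h0 : (0 : R) ≤ (1 / 2) ^ (k + 2) := by positivity
      rw [pow_succ _ (k + 2), show k + 1 + 1 = k + 2 from rfl]
      nlinarith
    have := qDescFactorial_pos (one_lt_two.trans_le hq) h
    calc (1 / 4 + (1 / 2) ^ (k + 1 + 2)) * q ^ ((n + 1 + 1) * (k + 1 + 1))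
        ≤ (1 / 4 + (1 / 2) ^ (k + 2)) * (1 - (1 / 2) ^ (k + 1 + 1)) *
            q ^ ((n + 1 + 1) * (k + 1 + 1)) := by gcongr
      _ = (1 - (1 / 2) ^ (k + 1 + 1)) * q ^ (n + 1 + 1) *
            (q ^ (k + 1) * ((1 / 4 + (1 / 2) ^ (k + 2)) * q ^ ((n + 1) * (k + 1)))) := by ring
      _ ≤ (q ^ (n + 1 + 1) - 1) * (q ^ (k + 1) * qDescFactorial q (n + 1) (k + 1)) := by
          gcongr
          · exact sub_nonneg.2 (one_le_pow₀ hq1)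
          · exact hone_sub _ _ h
          · exact ih (Nat.succ_le_succ_iff.1 h)
      _ = qDescFactorial q (n + 1 + 1) (k + 1 + 1) := by
          rw [qDescFactorial_succ_succ q (n + 1)]

lemma pow_le_four_mul_qDescFactorial (hq : 2 ≤ q) {n k : ℕ} (h : k ≤ n) :
    q ^ (n * k) ≤ 4 * qDescFactorial q n k := by
  cases k with
  | zero => simp
  | succ k =>
    obtain ⟨n, rfl⟩ := Nat.exists_eq_succ_of_ne_zero (Nat.ne_zero_of_lt h)
    have hquarter := quarter_add_mul_pow_le_qDescFactorial hq (Nat.succ_le_succ_iff.1 h)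
    have : 0 ≤ (1 / 2) ^ (k + 2) * q ^ ((n + 1) * (k + 1)) := by positivity
    rw [add_mul] at hquarter
    change q ^ ((n + 1) * (k + 1)) ≤ 4 * qDescFactorial q (n + 1) (k + 1)
    linarith

lemma gaussBinom_le_four_mul_pow (hq : 2 ≤ q) {n k : ℕ} (h : k ≤ n) :
    gaussBinom q n k ≤ 4 * q ^ (k * (n - k)) := by
  have hq1 : 1 < q := one_lt_two.trans_le hq
  obtain ⟨v, rfl⟩ := Nat.exists_eq_add_of_le h
  rw [gaussBinom_eq_div hq1, div_le_iff₀ (qDescFactorial_pos hq1 le_rfl), add_tsub_cancel_left]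
  calc qDescFactorial q (k + v) k ≤ q ^ ((k + v) * k) := qDescFactorial_le_pow hq1 h
    _ = q ^ (k * v) * q ^ (k * k) := by ring
    _ ≤ q ^ (k * v) * (4 * qDescFactorial q k k) := by
        gcongr; exact pow_le_four_mul_qDescFactorial hq le_rfl
    _ = 4 * q ^ (k * v) * qDescFactorial q k k := by ring

lemma pow_mul_gaussBinom_le_gaussBinom_succ (hq : 1 < q) {n k : ℕ} (h : 2 * k + 1 ≤ n) :
    q ^ (n - (2 * k + 1)) * gaussBinom q n k ≤ gaussBinom q n (k + 1) := by
  obtain ⟨c, rfl⟩ := Nat.exists_eq_add_of_le h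
  have hk := qDescFactorial_pos hq (le_refl k)
  have hnk := qDescFactorial_pos hq (show k ≤ 2 * k + 1 + c by omega)
  have hc : 1 ≤ q ^ c := one_le_pow₀ hq.le
  rw [add_tsub_cancel_left, gaussBinom_eq_div hq _ (k + 1), gaussBinom_eq_div hq,
    le_div_iff₀ (qDescFactorial_pos hq le_rfl), qDescFactorial_succ_succ,
    qDescFactorial_succ_right]
  calc q ^ c * (qDescFactorial q (2 * k + 1 + c) k / qDescFactorial q k k) *
        ((q ^ (k + 1) - 1) * (q ^ k * qDescFactorial q k k))
      = qDescFactorial q (2 * k + 1 + c) k * (q ^ (2 * k + 1 + c) - q ^ k * q ^ c) := by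
        field_simp; ring
    _ ≤ qDescFactorial q (2 * k + 1 + c) k * (q ^ (2 * k + 1 + c) - q ^ k) := by
        gcongr; exact le_mul_of_one_le_right (by positivity) hc

lemma pow_mul_gaussBinom_le_gaussBinom_add (hq : 1 < q) {n k a : ℕ} (h : 2 * (k + a) ≤ n) :
    q ^ ((n - (2 * k + a)) * a) * gaussBinom q n k ≤ gaussBinom q n (k + a) := by
  induction a with
  | zero => simp
  | succ a ih =>
    have hexp : (n - (2 * k + (a + 1))) * (a + 1) =
        (n - (2 * (k + a) + 1)) + (n - (2 * k + a)) * a := by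
      obtain ⟨c, rfl⟩ := Nat.exists_eq_add_of_le h
      simp only [show 2 * (k + (a + 1)) + c - (2 * k + (a + 1)) = a + 1 + c by omega,
        show 2 * (k + (a + 1)) + c - (2 * (k + a) + 1) = 1 + c by omega,
        show 2 * (k + (a + 1)) + c - (2 * k + a) = a + 2 + c by omega]
      ring
    calc q ^ ((n - (2 * k + (a + 1))) * (a + 1)) * gaussBinom q n k
        = q ^ (n - (2 * (k + a) + 1)) * (q ^ ((n - (2 * k + a)) * a) * gaussBinom q n k) := by
          rw [hexp, pow_add, mul_assoc]
      _ ≤ q ^ (n - (2 * (k + a) + 1)) * gaussBinom q n (k + a) := by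
          gcongr; exact ih (by omega)
      _ ≤ gaussBinom q n (k + (a + 1)) := pow_mul_gaussBinom_le_gaussBinom_succ hq (by omega)

/-- The gap between the two sides is `(n - u) * (m + s + a - n - u) + a * (n - s - a)`. -/
lemma ammc_exponent_le {n m u s a : ℕ} (hsu : s ≤ u) (hu : u ≤ n) (ht : s + a ≤ n)
    (hnm : 2 * n ≤ m + (s + a)) (htm : 2 * (s + a) ≤ m) :
    a * u + (u - s) * (m - u) ≤
      (m - n) * (n - (s + a)) + (m - (2 * s + a)) * a + n * a + a * s := by
  zify [hsu, show u ≤ m by omega, show n ≤ m by omega, ht, show 2 * s + a ≤ m by omega]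
  zify at hnm ht hu
  have hgap₁ : (0 : ℤ) ≤ (n - u) * (m + s + a - n - u) :=
    mul_nonneg (by linarith) (by linarith)
  have hgap₂ : (0 : ℤ) ≤ a * (n - (s + a)) := mul_nonneg (by positivity) (by linarith)
  linarith

lemma gaussBinom_mul_gaussBinom_le (hq : 2 ≤ q) {m u s : ℕ} (hum : u ≤ m) (hsu : s ≤ u) :
    gaussBinom q m u * gaussBinom q u s ≤ 4 * q ^ ((u - s) * (m - u)) * gaussBinom q m s := by
  have hGs := gaussBinom_nonneg (zero_le_two.trans hq) m s
  have hG := gaussBinom_le_four_mul_pow hq (show u - s ≤ m - s by omega)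
  rw [show m - s - (u - s) = m - u by omega] at hG
  rw [gaussBinom_mul_gaussBinom (one_lt_two.trans_le hq) hum hsu, mul_comm]
  gcongr

lemma pow_mul_gaussBinom_mul_qDescFactorial_le (hq : 2 ≤ q) {n m s a : ℕ} (ht : s + a ≤ n)
    (htm : 2 * (s + a) ≤ m) :
    q ^ ((m - (2 * s + a)) * a + n * a + a * s) *
        (gaussBinom q m s * qDescFactorial q (n - a) s) ≤
      (1 + a) * (gaussBinom q m (s + a) * qDescFactorial q n (s + a)) := by
  have hq1 : 1 < q := one_lt_two.trans_le hq
  obtain ⟨c, rfl⟩ := Nat.exists_eq_add_of_le (show a ≤ n by omega)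
  have hD := qDescFactorial_pos hq1 (show s ≤ c by omega)
  have hGt := gaussBinom_nonneg (zero_le_two.trans hq) m (s + a)
  rw [add_tsub_cancel_left, add_comm s a, qDescFactorial_add_add, add_comm a s]
  calc q ^ ((m - (2 * s + a)) * a + (a + c) * a + a * s) *
        (gaussBinom q m s * qDescFactorial q c s)
      = q ^ ((m - (2 * s + a)) * a) * gaussBinom q m s * q ^ ((a + c) * a) *
          (q ^ (a * s) * qDescFactorial q c s) := by ring
    _ ≤ gaussBinom q m (s + a) * ((1 + a) * qDescFactorial q (a + c) a) *
          (q ^ (a * s) * qDescFactorial q c s) := by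
        gcongr
        · exact pow_mul_gaussBinom_le_gaussBinom_add hq1 htm
        · exact pow_le_succ_mul_qDescFactorial hq (by omega)
    _ = (1 + a) * (gaussBinom q m (s + a) *
          (qDescFactorial q (a + c) a * (q ^ (a * s) * qDescFactorial q c s))) := by ring

lemma gaussBinom_mul_pow_mul_gaussBinom_mul_qDescFactorial_le (hq : 2 ≤ q)
    {n m u s a : ℕ} (hu : u ≤ n) (ht : s + a ≤ n) (hnm : 2 * n ≤ m + (s + a))
    (htm : 2 * (s + a) ≤ m) :
    gaussBinom q m u * (q ^ (a * u) * (gaussBinom q u s * qDescFactorial q (n - a) s)) ≤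
      4 * (1 + a) * q ^ ((m - n) * (n - (s + a))) *
        (gaussBinom q m (s + a) * qDescFactorial q n (s + a)) := by
  have hq1 : 1 < q := one_lt_two.trans_le hq
  have hD := qDescFactorial_pos hq1 (show s ≤ n - a by omega)
  have hGt := gaussBinom_nonneg (zero_le_two.trans hq) m (s + a)
  have hDt := qDescFactorial_pos hq1 ht
  rcases lt_or_ge u s with hus | hsu
  · rw [gaussBinom_eq_zero_of_lt q hus, zero_mul, mul_zero, mul_zero]
    positivity
  have hGs := gaussBinom_nonneg (zero_le_two.trans hq) m s
  set e := (m - n) * (n - (s + a))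
  set d := (m - (2 * s + a)) * a + n * a + a * s
  have hexp : a * u + (u - s) * (m - u) ≤ e + d := by
    have := ammc_exponent_le hsu hu ht hnm htm
    omega
  calc gaussBinom q m u * (q ^ (a * u) * (gaussBinom q u s * qDescFactorial q (n - a) s))
      = q ^ (a * u) * (gaussBinom q m u * gaussBinom q u s) * qDescFactorial q (n - a) s := by
        ring
    _ ≤ q ^ (a * u) * (4 * q ^ ((u - s) * (m - u)) * gaussBinom q m s) *
          qDescFactorial q (n - a) s := by
        gcongr q ^ (a * u) * ?_ * _
        exact gaussBinom_mul_gaussBinom_le hq (by omega) hsu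
    _ = 4 * q ^ (a * u + (u - s) * (m - u)) *
          (gaussBinom q m s * qDescFactorial q (n - a) s) := by ring
    _ ≤ 4 * q ^ (e + d) * (gaussBinom q m s * qDescFactorial q (n - a) s) := by
        gcongr; exact hq1.le
    _ = 4 * q ^ e * (q ^ d * (gaussBinom q m s * qDescFactorial q (n - a) s)) := by ring
    _ ≤ 4 * q ^ e * ((1 + a) * (gaussBinom q m (s + a) * qDescFactorial q n (s + a))) := by
        gcongr 4 * q ^ e * ?_
        exact pow_mul_gaussBinom_mul_qDescFactorial_le hq ht htm
    _ = 4 * (1 + a) * q ^ e * (gaussBinom q m (s + a) * qDescFactorial q n (s + a)) := by ring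

end Estimates

section MutualInfo

variable {α β : Type*} [Fintype α] [Fintype β] {b : ℝ}

lemma sum_mul_logb_div_le_logb_sum (hb : 1 < b) {P M : β → ℝ} (hP : ∀ y, 0 ≤ P y)
    (hP1 : ∑ y, P y = 1) (hM : ∀ y, 0 ≤ M y) (hPM : ∀ y, 0 < P y → 0 < M y) :
    ∑ y, P y * Real.logb b (M y / P y) ≤ Real.logb b (∑ y, M y) := by
  set B := ∑ y, M y
  have hB : 0 < B := by
    obtain ⟨y, -, hy⟩ := Finset.exists_lt_of_sum_lt (s := Finset.univ) (f := 0) (g := P)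
      (by simp [hP1])
    exact (hPM y hy).trans_le (Finset.single_le_sum (fun y _ => hM y) (Finset.mem_univ y))
  have hlogb : 0 < Real.log b := Real.log_pos hb
  have hterm (y) : P y * Real.log (M y / P y) ≤ P y * Real.log B + (M y / B - P y) := by
    rcases (hP y).eq_or_lt with h0 | hPy
    · rw [← h0]; simpa using div_nonneg (hM y) hB.le
    have hMy := hPM y hPy
    have hlog : Real.log (M y / P y) = Real.log B + Real.log (M y / (P y * B)) := by
      rw [← Real.log_mul hB.ne' (by positivity)]
      congr 1; field_simp
    calc P y * Real.log (M y / P y)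
        ≤ P y * (Real.log B + (M y / (P y * B) - 1)) := by
          rw [hlog]; gcongr; exact Real.log_le_sub_one_of_pos (by positivity)
      _ = P y * Real.log B + (M y / B - P y) := by field_simp
  calc ∑ y, P y * Real.logb b (M y / P y) = (∑ y, P y * Real.log (M y / P y)) / Real.log b := by
        simp only [Real.logb, mul_div_assoc, Finset.sum_div]
    _ ≤ (∑ y, (P y * Real.log B + (M y / B - P y))) / Real.log b := by
        gcongr with y; exact hterm y
    _ = Real.logb b B := by
        rw [Finset.sum_add_distrib, Finset.sum_sub_distrib, ← Finset.sum_mul, ← Finset.sum_div,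
          hP1, div_self hB.ne', sub_self, add_zero, one_mul, Real.logb]

lemma mutualInfoB_le_logb_sum (hb : 1 < b) {p : α → ℝ} (hp : ∀ x, 0 ≤ p x)
    (hp1 : ∑ x, p x = 1) {K : α → β → ℝ} (hK : ∀ x y, 0 ≤ K x y) (hK1 : ∀ x, ∑ y, K x y = 1)
    {M : β → ℝ} (hKM : ∀ x y, K x y ≤ M y) :
    mutualInfoB b p K ≤ Real.logb b (∑ y, M y) := by
  set P : β → ℝ := fun y => ∑ x, p x * K x y with hP_def
  have hpK (x y) : 0 ≤ p x * K x y := mul_nonneg (hp x) (hK x y)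
  have hP (y) : 0 ≤ P y := Finset.sum_nonneg fun x _ => hpK x y
  have hP1 : ∑ y, P y = 1 := by
    rw [Finset.sum_comm]
    simp only [← Finset.mul_sum, hK1, mul_one, hp1]
  have hM (y) : 0 < P y → 0 < M y := fun hy => by
    obtain ⟨x, -, hx⟩ := Finset.exists_ne_zero_of_sum_ne_zero hy.ne'
    exact ((hK x y).lt_of_ne' (right_ne_zero_of_mul hx)).trans_le (hKM x y)
  have hα : Nonempty α := by
    by_contra h
    rw [not_nonempty_iff] at h
    simp at hp1
  have hterm (x y) : p x * K x y * Real.logb b (K x y / P y) ≤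
      p x * K x y * Real.logb b (M y / P y) := by
    rcases (hpK x y).eq_or_lt with h0 | hpos
    · rw [← h0, zero_mul, zero_mul]
    have hKpos : 0 < K x y := pos_of_mul_pos_right hpos (hp x)
    have hPpos : 0 < P y :=
      hpos.trans_le (Finset.single_le_sum (fun x _ => hpK x y) (Finset.mem_univ x))
    gcongr
    exact hKM x y
  calc mutualInfoB b p K ≤ ∑ x, ∑ y, p x * K x y * Real.logb b (M y / P y) :=
        Finset.sum_le_sum fun x _ => Finset.sum_le_sum fun y _ => hterm x y
    _ = ∑ y, P y * Real.logb b (M y / P y) := by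
        rw [Finset.sum_comm]
        simp only [← Finset.sum_mul, hP_def]
    _ ≤ Real.logb b (∑ y, M y) := sum_mul_logb_div_le_logb_sum hb hP hP1
        (fun y => (hK hα.some y).trans (hKM _ y)) hM

lemma capacityB_le_logb_sum [Nonempty α] (hb : 1 < b) {K : α → β → ℝ} (hK : ∀ x y, 0 ≤ K x y)
    (hK1 : ∀ x, ∑ y, K x y = 1) {M : β → ℝ} (hKM : ∀ x y, K x y ≤ M y) :
    capacityB b K ≤ Real.logb b (∑ y, M y) := by
  have hone : 1 ≤ ∑ y, M y :=
    (hK1 (Classical.arbitrary α)).symm.le.trans (Finset.sum_le_sum fun y _ => hKM _ y)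
  refine Real.sSup_le ?_ (Real.logb_nonneg hb hone)
  rintro _ ⟨p, hp, hp1, rfl⟩
  exact mutualInfoB_le_logb_sum hb hp hp1 hK hK1 hKM

lemma sum_inv_natCard_fiber_le {ι : Type*} (f : α → ι) {s : Finset ι} (hf : ∀ a, f a ∈ s) :
    ∑ a, (Nat.card {a' // f a' = f a} : ℝ)⁻¹ ≤ s.card := by
  classical
  rw [← Finset.sum_fiberwise_of_maps_to fun a _ => hf a, Finset.card_eq_sum_ones, Nat.cast_sum]
  refine Finset.sum_le_sum fun i _ => ?_
  calc ∑ a with f a = i, (Nat.card {a' // f a' = f a} : ℝ)⁻¹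
      = ∑ a with f a = i, (Nat.card {a' // f a' = i} : ℝ)⁻¹ :=
        Finset.sum_congr rfl fun a ha => by rw [(Finset.mem_filter.1 ha).2]
    _ = Nat.card {a' // f a' = i} * (Nat.card {a' // f a' = i} : ℝ)⁻¹ := by
        rw [Finset.sum_const, nsmul_eq_mul, Nat.card_eq_fintype_card, Fintype.card_subtype]
    _ ≤ (1 : ℕ) := by simpa using mul_inv_le_one

end MutualInfo

section LinearMaps

open Module Submodule LinearMap

variable {F : Type*} [Field F] {V W : Type*} [AddCommGroup V] [Module F V] [AddCommGroup W]
  [Module F W]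

lemma natCard_linearMap_le_ker_and (E : Submodule F V) (P : (V →ₗ[F] W) → Prop) :
    Nat.card {f : V →ₗ[F] W // E ≤ ker f ∧ P f} =
      Nat.card {h : V ⧸ E →ₗ[F] W // P (h ∘ₗ E.mkQ)} :=
  Nat.card_congr
    { toFun f := ⟨E.liftQ f.1 f.2.1, by rw [liftQ_mkQ]; exact f.2.2⟩
      invFun h := ⟨h.1 ∘ₗ E.mkQ, by simpa using ker_le_ker_comp E.mkQ h.1, h.2⟩
      left_inv f := Subtype.ext (liftQ_mkQ _ _ f.2.1)
      right_inv h := Subtype.ext (linearMap_qext _ (liftQ_mkQ _ _ _)) }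

lemma natCard_subtype_comp_of_surjective [Finite F] [Module.Finite F V] {φ : V →ₗ[F] W}
    (hφ : Function.Surjective φ) (P : W → Prop) :
    Nat.card {v // P (φ v)} = Nat.card F ^ finrank F (ker φ) * Nat.card {w // P w} := by
  have : Finite V := Module.finite_of_finite F
  have : Finite W := Finite.of_surjective φ hφ
  have := Fintype.ofFinite {w // P w}
  have hfiber (w : W) : Nat.card {v // φ v = w} = Nat.card F ^ finrank F (ker φ) :=
    (Nat.card_congr (AddMonoidHom.fiberEquivKerOfSurjective (f := φ.toAddMonoidHom) hφ w)).trans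
      (Module.natCard_eq_pow_finrank (V := ker φ))
  rw [← Nat.card_congr (Equiv.sigmaSubtypeFiberEquivSubtype φ fun _ => Iff.rfl), Nat.card_sigma]
  simp [hfiber, mul_comm]

lemma natCard_tuple_succ_finrank_span_eq (k r : ℕ) :
    Nat.card {f : Fin (k + 1) → W // finrank F (span F (Set.range f)) = r} =
      Nat.card (Σ f : Fin k → W,
        {w : W // finrank F ↥(span F (Set.range f) ⊔ span F {w}) = r}) := by
  let e := (Fin.consEquiv fun _ => W).symm.trans (Equiv.prodComm W (Fin k → W))
  refine Nat.card_congr ((e.subtypeEquiv fun f => ?_).trans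
    (Equiv.subtypeProdEquivSigmaSubtype fun (f : Fin k → W) w =>
      finrank F ↥(span F (Set.range f) ⊔ span F {w}) = r))
  obtain ⟨⟨w, f⟩, rfl⟩ := (Fin.consEquiv fun _ => W).surjective f
  change finrank F (span F (Set.range (Fin.cons w f : Fin (k + 1) → W))) = r ↔
    finrank F ↥(span F (Set.range f) ⊔ span F {w}) = r
  rw [Fin.range_cons, span_insert, sup_comm]

variable [Module.Finite F W]

lemma finrank_range_eq_finrank_add_finrank_range_mkQ_comp {S : Submodule F W} {f : V →ₗ[F] W}
    (hS : S ≤ range f) :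
    finrank F (range f) = finrank F S + finrank F (range (S.mkQ ∘ₗ f)) := by
  have h := (S.mkQ.domRestrict (range f)).finrank_range_add_finrank_ker
  rw [range_domRestrict, ← range_comp, ker_domRestrict, ker_mkQ,
    ← finrank_map_subtype_eq, map_comap_subtype, inf_eq_right.2 hS] at h
  rw [← h, add_comm]

lemma exists_linearEquiv_comp_eq_of_ker_eq {f g : V →ₗ[F] W} (h : ker f = ker g) :
    ∃ e : W ≃ₗ[F] W, e.toLinearMap ∘ₗ f = g := by
  obtain ⟨e, he⟩ := exists_linearEquiv_restrict_eq
    (f.quotKerEquivRange.symm ≪≫ₗ quotEquivOfEq _ _ h ≪≫ₗ g.quotKerEquivRange)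
  refine ⟨e, LinearMap.ext fun v => ?_⟩
  have hv := he (f.quotKerEquivRange (Submodule.Quotient.mk v))
  simpa using hv.symm

lemma finrank_map_le_finrank_range_of_le_ker_add {f g : V →ₗ[F] W} {E : Submodule F V}
    (h : E ≤ ker (g + f)) : finrank F (E.map g) ≤ finrank F (range f) := by
  refine finrank_mono ?_
  rintro _ ⟨v, hv, rfl⟩
  exact ⟨-v, by rw [map_neg, neg_eq_of_add_eq_zero_left (h hv)]⟩

end LinearMaps

section Counting

open Module Submodule LinearMap

variable {F : Type*} [Field F] [Finite F] {V W : Type*} [AddCommGroup V] [Module F V]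
  [Module.Finite F V] [AddCommGroup W] [Module F W] [Module.Finite F W] {R : Type*} [CommRing R]

lemma natCard_finrank_sup_span_singleton_eq_succ (S : Submodule F W) (r : ℕ) :
    (Nat.card {w : W // finrank F ↥(S ⊔ span F {w}) = r + 1} : R) =
      (if finrank F S = r + 1 then (Nat.card F : R) ^ (r + 1) else 0) +
        if finrank F S = r then (Nat.card F : R) ^ finrank F W - (Nat.card F : R) ^ r else 0 := by
  classical
  have : Finite W := Module.finite_of_finite F
  have hS : Nat.card S = Nat.card F ^ finrank F S := Module.natCard_eq_pow_finrank
  have hcompl : Nat.card S + Nat.card {w // w ∉ S} = Nat.card W := by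
    rw [← Nat.card_sum]
    exact Nat.card_congr (Equiv.sumCompl (· ∈ S))
  have hdim (w : W) : finrank F ↥(S ⊔ span F {w}) = finrank F S + if w ∈ S then 0 else 1 := by
    split_ifs with hw
    · rw [sup_eq_left.2 ((span_singleton_le_iff_mem _ _).2 hw), add_zero]
    · exact finrank_sup_span_singleton hw
  rcases eq_or_ne (finrank F S) (r + 1) with h | h
  · have hmem (w : W) : finrank F ↥(S ⊔ span F {w}) = r + 1 ↔ w ∈ S := by grind
    rw [if_pos h, if_neg (by omega), add_zero, ← h, ← Nat.cast_pow, ← hS]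
    simp [hmem, h]
  rcases eq_or_ne (finrank F S) r with h' | h'
  · have hmem (w : W) : finrank F ↥(S ⊔ span F {w}) = r + 1 ↔ w ∉ S := by grind
    simp only [hmem]
    rw [if_neg h, if_pos h', zero_add, ← h', ← Nat.cast_pow, ← Nat.cast_pow, ← hS,
      ← Module.natCard_eq_pow_finrank, eq_sub_iff_add_eq', ← Nat.cast_add, ← hcompl]
  · have : IsEmpty {w : W // finrank F ↥(S ⊔ span F {w}) = r + 1} :=
      Subtype.isEmpty_of_false fun w => by rw [hdim]; grind
    rw [if_neg h, if_neg h', add_zero, Nat.card_of_isEmpty, Nat.cast_zero]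

lemma natCard_tuple_finrank_span_eq (k r : ℕ) :
    (Nat.card {f : Fin k → W // finrank F (span F (Set.range f)) = r} : R) =
      gaussBinom (Nat.card F : R) k r * qDescFactorial (Nat.card F : R) (finrank F W) r := by
  have : Finite W := Module.finite_of_finite F
  induction k generalizing r with
  | zero =>
    have hspan (f : Fin 0 → W) : finrank F (span F (Set.range f)) = 0 := by
      rw [Set.range_eq_empty, span_empty, finrank_bot]
    cases r <;> simp [hspan, gaussBinom]
  | succ k ih =>
    cases r with
    | zero =>
      have hzero (f : Fin (k + 1) → W) : finrank F (span F (Set.range f)) = 0 ↔ f = 0 := by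
        simp [span_eq_bot, funext_iff]
      simp [hzero]
    | succ r =>
      classical
      have := Fintype.ofFinite (Fin k → W)
      have hsum (s : ℕ) (c : R) :
          (∑ f : Fin k → W, if finrank F (span F (Set.range f)) = s then c else 0) =
            gaussBinom (Nat.card F : R) k s *
              qDescFactorial (Nat.card F : R) (finrank F W) s * c := by
        rw [← ih, Nat.card_eq_fintype_card, Fintype.card_subtype, ← Finset.sum_filter,
          Finset.sum_const, nsmul_eq_mul]
      rw [natCard_tuple_succ_finrank_span_eq, Nat.card_sigma, Nat.cast_sum]
      simp only [natCard_finrank_sup_span_singleton_eq_succ, Finset.sum_add_distrib, hsum,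
        gaussBinom, qDescFactorial_succ_right]
      ring

lemma natCard_linearMap_finrank_range_eq (r : ℕ) :
    (Nat.card {f : V →ₗ[F] W // finrank F (range f) = r} : R) =
      gaussBinom (Nat.card F : R) (finrank F V) r *
        qDescFactorial (Nat.card F : R) (finrank F W) r := by
  rw [← natCard_tuple_finrank_span_eq]
  refine congrArg _ (Nat.card_congr (Equiv.subtypeEquiv
    ((finBasis F V).constr F).toEquiv fun f => ?_).symm)
  rw [← (finBasis F V).constr_range F]; rfl

lemma natCard_linearMap_ker_eq_bot :
    (Nat.card {f : V →ₗ[F] W // ker f = ⊥} : R) =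
      qDescFactorial (Nat.card F : R) (finrank F W) (finrank F V) := by
  have hker (f : V →ₗ[F] W) : ker f = ⊥ ↔ finrank F (range f) = finrank F V := by
    rw [← f.finrank_range_add_finrank_ker, left_eq_add, finrank_eq_zero]
  simp only [hker, natCard_linearMap_finrank_range_eq, gaussBinom_self, one_mul]

lemma natCard_linearMap_ker_eq (E : Submodule F V) :
    (Nat.card {f : V →ₗ[F] W // ker f = E} : R) =
      qDescFactorial (Nat.card F : R) (finrank F W) (finrank F (V ⧸ E)) := by
  have hker (h : V ⧸ E →ₗ[F] W) : ker (h ∘ₗ E.mkQ) ≤ E ↔ ker h = ⊥ := by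
    rw [ker_comp, ← (comap_injective_of_surjective E.mkQ_surjective).eq_iff, comap_bot, ker_mkQ]
    exact (le_comap_mkQ E (ker h)).ge_iff_eq'
  simp only [le_antisymm_iff (b := E), and_comm (b := E ≤ _), natCard_linearMap_le_ker_and, hker,
    natCard_linearMap_ker_eq_bot]

lemma natCard_linearMap_mkQ_comp (S : Submodule F W) (P : (V →ₗ[F] W ⧸ S) → Prop) :
    Nat.card {h : V →ₗ[F] W // P (S.mkQ ∘ₗ h)} =
      Nat.card F ^ (finrank F S * finrank F V) * Nat.card {k : V →ₗ[F] W ⧸ S // P k} := by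
  set φ : (V →ₗ[F] W) →ₗ[F] (V →ₗ[F] W ⧸ S) := S.mkQ.compRight F
  have hφ : Function.Surjective φ := fun k => projective_lifting_property S.mkQ k S.mkQ_surjective
  have hdim : finrank F (ker φ) = finrank F S * finrank F V := by
    have h := φ.finrank_range_add_finrank_ker
    rw [range_eq_top.2 hφ, finrank_top, finrank_linearMap, finrank_linearMap,
      ← S.finrank_quotient_add_finrank, mul_add, add_right_inj] at h
    rw [h, mul_comm]
  rw [← hdim]
  exact natCard_subtype_comp_of_surjective hφ P

/-- The maps `h : V ⧸ E → W` induced by `g + f` parametrize the admissible `f`, and modulo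
`E.map g = E.map f` such an `f` is itself a translate of `h`. -/
lemma natCard_linearMap_le_ker_add_and_finrank_range_eq (g : V →ₗ[F] W) (E : Submodule F V)
    (s : ℕ) :
    (Nat.card {f : V →ₗ[F] W // E ≤ ker (g + f) ∧
        finrank F (range f) = finrank F (E.map g) + s} : R) =
      (Nat.card F : R) ^ (finrank F (E.map g) * finrank F (V ⧸ E)) *
        (gaussBinom (Nat.card F : R) (finrank F (V ⧸ E)) s *
          qDescFactorial (Nat.card F : R) (finrank F W - finrank F (E.map g)) s) := by
  set S := E.map g
  set gE : V ⧸ E →ₗ[F] W ⧸ S := E.mapQ S g (le_comap_map g E)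
  have hrank (h : V ⧸ E →ₗ[F] W) :
      finrank F (range (h ∘ₗ E.mkQ - g)) = finrank F S + s ↔
        finrank F (range (S.mkQ ∘ₗ h - gE)) = s := by
    have hS : S ≤ range (h ∘ₗ E.mkQ - g) := by
      rintro _ ⟨v, hv, rfl⟩
      exact ⟨-v, by simp [(Submodule.Quotient.mk_eq_zero E).2 hv]⟩
    have hcomp : S.mkQ ∘ₗ (h ∘ₗ E.mkQ - g) = (S.mkQ ∘ₗ h - gE) ∘ₗ E.mkQ := by
      ext; simp [gE]
    rw [finrank_range_eq_finrank_add_finrank_range_mkQ_comp hS, hcomp,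
      range_comp_of_range_eq_top _ E.range_mkQ, add_right_inj]
  have hcount := calc
    Nat.card {f : V →ₗ[F] W // E ≤ ker (g + f) ∧ finrank F (range f) = finrank F S + s}
      = Nat.card {f : V →ₗ[F] W // E ≤ ker f ∧ finrank F (range (f - g)) = finrank F S + s} :=
        Nat.card_congr ((Equiv.addLeft g).subtypeEquiv fun f => by
          rw [Equiv.coe_addLeft, add_sub_cancel_left g f])
    _ = Nat.card {h : V ⧸ E →ₗ[F] W // finrank F (range (S.mkQ ∘ₗ h - gE)) = s} := by
        simp only [natCard_linearMap_le_ker_and, hrank]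
    _ = Nat.card F ^ (finrank F S * finrank F (V ⧸ E)) *
          Nat.card {k : V ⧸ E →ₗ[F] W ⧸ S // finrank F (range (k - gE)) = s} :=
        natCard_linearMap_mkQ_comp S fun k => finrank F (range (k - gE)) = s
    _ = Nat.card F ^ (finrank F S * finrank F (V ⧸ E)) *
          Nat.card {k : V ⧸ E →ₗ[F] W ⧸ S // finrank F (range k) = s} := by
        congr 1
        exact Nat.card_congr ((Equiv.subRight gE).subtypeEquiv fun _ => Iff.rfl)
  rw [hcount, Nat.cast_mul, Nat.cast_pow, natCard_linearMap_finrank_range_eq, S.finrank_quotient]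

lemma gaussBinom_mul_natCard_linearMap_le (g : V →ₗ[F] W) {E : Submodule F V} {t : ℕ}
    (hE : finrank F (V ⧸ E) ≤ finrank F W) (ht : t ≤ finrank F W)
    (hWV : 2 * finrank F W ≤ finrank F V + t) (htV : 2 * t ≤ finrank F V) :
    gaussBinom (Nat.card F : ℝ) (finrank F V) (finrank F (V ⧸ E)) *
        Nat.card {f : V →ₗ[F] W // E ≤ ker (g + f) ∧ finrank F (range f) = t} ≤
      4 * (1 + t) * (Nat.card F : ℝ) ^ ((finrank F V - finrank F W) * (finrank F W - t)) *
        Nat.card {f : V →ₗ[F] W // finrank F (range f) = t} := by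
  rcases lt_or_ge t (finrank F (E.map g)) with hlt | hle
  · have hempty : IsEmpty {f : V →ₗ[F] W // E ≤ ker (g + f) ∧ finrank F (range f) = t} :=
      Subtype.isEmpty_of_false fun f hf =>
        (hlt.trans_le (finrank_map_le_finrank_range_of_le_ker_add hf.1)).ne' hf.2
    rw [Nat.card_eq_zero.2 (.inl hempty), Nat.cast_zero, mul_zero]
    positivity
  obtain ⟨s, rfl⟩ := Nat.exists_eq_add_of_le hle
  have hq : (2 : ℝ) ≤ Nat.card F := by exact_mod_cast Finite.one_lt_card
  rw [natCard_linearMap_le_ker_add_and_finrank_range_eq, natCard_linearMap_finrank_range_eq]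
  rw [add_comm _ s] at ht hWV htV ⊢
  have hD := qDescFactorial_pos (one_lt_two.trans_le hq) ht
  have hG := gaussBinom_nonneg (zero_le_two.trans hq) (finrank F V) (s + finrank F (E.map g))
  refine (gaussBinom_mul_pow_mul_gaussBinom_mul_qDescFactorial_le hq hE ht hWV htV).trans ?_
  gcongr
  exact Nat.le_add_left _ s

end Counting

section Matrices

open Module Matrix

variable {F : Type*} [Field F] {n m : ℕ}

lemma ker_mulVecLin_GL_mul (A : GL (Fin n) F) (M : Matrix (Fin n) (Fin m) F) :
    LinearMap.ker (A.1 * M).mulVecLin = LinearMap.ker M.mulVecLin := by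
  rw [mulVecLin_mul, LinearMap.ker_comp_of_ker_eq_bot]
  exact LinearMap.ker_eq_bot.2 (mulVec_injective_of_isUnit A.isUnit)

lemma exists_GL_mul_eq_of_ker_mulVecLin_eq {Y Z : Matrix (Fin n) (Fin m) F}
    (h : LinearMap.ker Y.mulVecLin = LinearMap.ker Z.mulVecLin) :
    ∃ A : GL (Fin n) F, A.1 * Y = Z := by
  obtain ⟨e, he⟩ := exists_linearEquiv_comp_eq_of_ker_eq h
  let A : GL (Fin n) F := GeneralLinearGroup.toLin.symm
    ((LinearMap.GeneralLinearGroup.generalLinearEquiv F _).symm e)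
  have hA : A.1.mulVecLin = e.toLinearMap := LinearMap.ext fun v => by
    rw [← GeneralLinearGroup.toLin_apply, MulEquiv.apply_symm_apply]
    rfl
  refine ⟨A, toLin'.injective ?_⟩
  rw [toLin'_apply', toLin'_apply', mulVecLin_mul, hA, he]

variable [Finite F]

lemma natCard_matrix_rank_eq (r : ℕ) :
    (Nat.card {M : Matrix (Fin n) (Fin m) F // M.rank = r} : ℝ) =
      gaussBinom (Nat.card F : ℝ) m r * qDescFactorial (Nat.card F : ℝ) n r := by
  have h := natCard_linearMap_finrank_range_eq (F := F) (V := Fin m → F) (W := Fin n → F)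
    (R := ℝ) r
  rw [finrank_fin_fun, finrank_fin_fun] at h
  rw [← h]
  exact congrArg _ (Nat.card_congr (toLin'.toEquiv.subtypeEquiv fun M => Iff.rfl))

lemma natCard_matrix_ker_mulVecLin_eq (Y : Matrix (Fin n) (Fin m) F) :
    (Nat.card {M : Matrix (Fin n) (Fin m) F //
        LinearMap.ker M.mulVecLin = LinearMap.ker Y.mulVecLin} : ℝ) =
      qDescFactorial (Nat.card F : ℝ) n Y.rank := by
  have h := natCard_linearMap_ker_eq (W := Fin n → F) (R := ℝ) (LinearMap.ker Y.mulVecLin)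
  rw [finrank_fin_fun, Y.mulVecLin.quotKerEquivRange.finrank_eq] at h
  rw [Matrix.rank, ← h]
  exact congrArg _ (Nat.card_congr (toLin'.toEquiv.subtypeEquiv fun M => Iff.rfl))

lemma natCard_matrix_rank_eq_pos {t : ℕ} (hn : t ≤ n) (hm : t ≤ m) :
    (0 : ℝ) < Nat.card {M : Matrix (Fin n) (Fin m) F // M.rank = t} := by
  have hq : (1 : ℝ) < Nat.card F := by exact_mod_cast Finite.one_lt_card
  rw [natCard_matrix_rank_eq]
  exact mul_pos (gaussBinom_pos hq hm) (qDescFactorial_pos hq hn)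

lemma gaussBinom_mul_natCard_matrix_ker_add_eq_le (X Y : Matrix (Fin n) (Fin m) F) {t : ℕ}
    (ht : t ≤ n) (hnm : 2 * n ≤ m + t) (htm : 2 * t ≤ m) :
    gaussBinom (Nat.card F : ℝ) m Y.rank *
        Nat.card {W : {W : Matrix (Fin n) (Fin m) F // W.rank = t} //
          LinearMap.ker (X + W.1).mulVecLin = LinearMap.ker Y.mulVecLin} ≤
      4 * (1 + t) * (Nat.card F : ℝ) ^ ((m - n) * (n - t)) *
        Nat.card {W : Matrix (Fin n) (Fin m) F // W.rank = t} := by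
  have hdim : finrank F ((Fin m → F) ⧸ LinearMap.ker Y.mulVecLin) = Y.rank :=
    Y.mulVecLin.quotKerEquivRange.finrank_eq
  have hbound := gaussBinom_mul_natCard_linearMap_le X.mulVecLin (t := t)
    (E := LinearMap.ker Y.mulVecLin)
    (by rw [hdim, finrank_fin_fun]; exact Y.rank_le_height)
  simp only [finrank_fin_fun, hdim] at hbound
  have hrank : Nat.card {f : (Fin m → F) →ₗ[F] Fin n → F // finrank F (LinearMap.range f) = t} =
      Nat.card {W : Matrix (Fin n) (Fin m) F // W.rank = t} :=
    (Nat.card_congr (toLin'.toEquiv.subtypeEquiv fun M => Iff.rfl)).symm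
  have hG := gaussBinom_nonneg (Nat.cast_nonneg (α := ℝ) (Nat.card F)) m Y.rank
  rw [← hrank]
  have : Finite ((Fin m → F) →ₗ[F] Fin n → F) := Module.finite_of_finite F
  refine le_trans ?_ (hbound ht hnm htm)
  gcongr
  refine Nat.card_le_card_of_injective (fun W => ⟨W.1.1.mulVecLin, ?_, W.1.2⟩) fun W W' h => ?_
  · rw [← mulVecLin_add, W.2]
  · exact Subtype.ext (Subtype.ext (toLin'.injective (congrArg Subtype.val h)))

end Matrices

section Channel

open Matrix

variable {F : Type} [Field F] [Fintype F] {n m t : ℕ}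

lemma ammcKernel_nonneg (X Y : Matrix (Fin n) (Fin m) F) : 0 ≤ ammcKernel F n m t X Y := by
  unfold ammcKernel
  positivity

lemma sum_ammcKernel (hn : t ≤ n) (hm : t ≤ m)
    (X : Matrix (Fin n) (Fin m) F) : ∑ Y, ammcKernel F n m t X Y = 1 := by
  have hT := natCard_matrix_rank_eq_pos (F := F) hn hm
  have hG : (0 : ℝ) < Nat.card (GL (Fin n) F) := by exact_mod_cast Nat.card_pos
  simp only [ammcKernel]
  rw [← Finset.sum_div, div_eq_one_iff_eq (mul_pos hG hT).ne', ← Nat.cast_sum, ← Nat.cast_mul,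
    ← Nat.card_sigma, ← Nat.card_prod]
  exact congrArg _ (Nat.card_congr (Equiv.sigmaFiberEquiv _))

lemma ammcKernel_GL_mul (X Y : Matrix (Fin n) (Fin m) F) (B : GL (Fin n) F) :
    ammcKernel F n m t X (B.1 * Y) = ammcKernel F n m t X Y := by
  have hB (M N : Matrix (Fin n) (Fin m) F) : B.1 * M = B.1 * N ↔ M = N :=
    ⟨fun h => by
      have := congrArg (B⁻¹.1 * ·) h
      simpa only [← Matrix.mul_assoc, Units.inv_mul, Matrix.one_mul] using this,
     congrArg _⟩
  unfold ammcKernel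
  congr 2
  refine (Nat.card_congr (((Equiv.mulLeft B).prodCongr (Equiv.refl _)).subtypeEquiv
    fun p => ?_)).symm
  change _ ↔ B.1 * p.1.1 * (X + p.2.1) = B.1 * Y
  rw [Matrix.mul_assoc, hB]

lemma ammcKernel_mul_natCard_ker_eq (X Y : Matrix (Fin n) (Fin m) F) :
    ammcKernel F n m t X Y * Nat.card {M : Matrix (Fin n) (Fin m) F //
        LinearMap.ker M.mulVecLin = LinearMap.ker Y.mulVecLin} =
      (Nat.card {W : {W : Matrix (Fin n) (Fin m) F // W.rank = t} //
          LinearMap.ker (X + W.1).mulVecLin = LinearMap.ker Y.mulVecLin} : ℝ) /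
        Nat.card {W : Matrix (Fin n) (Fin m) F // W.rank = t} := by
  classical
  set S := {M : Matrix (Fin n) (Fin m) F //
    LinearMap.ker M.mulVecLin = LinearMap.ker Y.mulVecLin}
  set T := {W : Matrix (Fin n) (Fin m) F // W.rank = t}
  have hconst (M : S) : ammcKernel F n m t X M.1 = ammcKernel F n m t X Y := by
    obtain ⟨B, hB⟩ := exists_GL_mul_eq_of_ker_mulVecLin_eq M.2.symm
    rw [← hB, ammcKernel_GL_mul]
  have hpairs : Nat.card (Σ M : S, {p : GL (Fin n) F × T // p.1.1 * (X + p.2.1) = M.1}) =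
      Nat.card (GL (Fin n) F) *
        Nat.card {W : T // LinearMap.ker (X + W.1).mulVecLin = LinearMap.ker Y.mulVecLin} := by
    have hker (p : GL (Fin n) F × T) :
        LinearMap.ker (X + p.2.1).mulVecLin = LinearMap.ker Y.mulVecLin ↔
          LinearMap.ker (p.1.1 * (X + p.2.1)).mulVecLin = LinearMap.ker Y.mulVecLin := by
      rw [ker_mulVecLin_GL_mul]
    rw [mul_comm, ← Nat.card_prod]
    exact Nat.card_congr <|
      (Equiv.sigmaSubtypeFiberEquivSubtype (fun p : GL (Fin n) F × T => p.1.1 * (X + p.2.1))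
        hker).trans <|
      ((Equiv.prodComm _ _).subtypeEquiv fun _ => Iff.rfl).trans <|
      Equiv.prodSubtypeFstEquivSubtypeProd
  have hG : (Nat.card (GL (Fin n) F) : ℝ) ≠ 0 := by exact_mod_cast Nat.card_pos.ne'
  calc ammcKernel F n m t X Y * Nat.card S = ∑ M : S, ammcKernel F n m t X M.1 := by
        simp [hconst, mul_comm]
    _ = (Nat.card (GL (Fin n) F) * Nat.card {W : T //
          LinearMap.ker (X + W.1).mulVecLin = LinearMap.ker Y.mulVecLin} : ℝ) /
            (Nat.card (GL (Fin n) F) * Nat.card T) := by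
        simp only [ammcKernel]
        rw [← Finset.sum_div, ← Nat.cast_sum, ← Nat.card_sigma, hpairs, Nat.cast_mul]
    _ = _ := mul_div_mul_left _ _ hG

lemma ammcKernel_le (ht : t ≤ n) (hnm : 2 * n ≤ m + t) (htm : 2 * t ≤ m)
    (X Y : Matrix (Fin n) (Fin m) F) :
    ammcKernel F n m t X Y ≤ 4 * (1 + t) * (Nat.card F : ℝ) ^ ((m - n) * (n - t)) *
      (Nat.card {W : Matrix (Fin n) (Fin m) F // W.rank = Y.rank} : ℝ)⁻¹ := by
  have hT := natCard_matrix_rank_eq_pos (F := F) ht (show t ≤ m by omega)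
  have hY := natCard_matrix_rank_eq_pos (F := F) Y.rank_le_height Y.rank_le_width
  have hK := ammcKernel_mul_natCard_ker_eq (t := t) X Y
  rw [natCard_matrix_ker_mulVecLin_eq] at hK
  rw [← div_eq_mul_inv, le_div_iff₀ hY, natCard_matrix_rank_eq, mul_left_comm, hK, ← mul_div_assoc,
    div_le_iff₀ hT]
  exact gaussBinom_mul_natCard_matrix_ker_add_eq_le X Y ht hnm htm

end Channel

theorem stmt_16_general (F : Type) [Field F] [Fintype F] (n m t : ℕ)
    (ht : t ≤ n) (hnm : 2 * n ≤ m + t) (htm : 2 * t ≤ m) :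
    capacityB (Fintype.card F) (ammcKernel F n m t)
      ≤ ((m : ℝ) - n) * ((n : ℝ) - t) +
          Real.logb (Fintype.card F) (4 * (1 + (n : ℝ)) * (1 + (t : ℝ))) := by
  rw [← Nat.card_eq_fintype_card]
  set q := (Nat.card F : ℝ)
  have hq : 1 < q := Nat.one_lt_cast.2 Finite.one_lt_card
  set c : ℝ := 4 * (1 + t) * q ^ ((m - n) * (n - t))
  set rankCount : ℕ → ℝ := fun u => (Nat.card {W : Matrix (Fin n) (Fin m) F // W.rank = u} : ℝ)
  have hsum : ∑ Y : Matrix (Fin n) (Fin m) F, (rankCount Y.rank)⁻¹ ≤ n + 1 := by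
    simpa only [Finset.card_range, Nat.cast_add, Nat.cast_one] using
      sum_inv_natCard_fiber_le Matrix.rank (s := Finset.range (n + 1))
        fun Y : Matrix (Fin n) (Fin m) F => Finset.mem_range_succ_iff.2 Y.rank_le_height
  have hsum_pos : 0 < ∑ Y : Matrix (Fin n) (Fin m) F, (rankCount Y.rank)⁻¹ :=
    Finset.sum_pos (fun Y _ => inv_pos.2
      (natCard_matrix_rank_eq_pos Y.rank_le_height Y.rank_le_width)) Finset.univ_nonempty
  calc capacityB q (ammcKernel F n m t)
      ≤ Real.logb q (∑ Y : Matrix (Fin n) (Fin m) F, c * (rankCount Y.rank)⁻¹) :=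
        capacityB_le_logb_sum hq ammcKernel_nonneg (sum_ammcKernel ht (by omega))
          (ammcKernel_le ht hnm htm)
    _ ≤ Real.logb q (q ^ ((m - n) * (n - t)) * (4 * (1 + n) * (1 + t))) := by
        rw [← Finset.mul_sum]
        refine Real.logb_le_logb_of_le hq (mul_pos (by positivity) hsum_pos) ?_
        calc c * ∑ Y : Matrix (Fin n) (Fin m) F, (rankCount Y.rank)⁻¹ ≤ c * (n + 1) := by gcongr
          _ = q ^ ((m - n) * (n - t)) * (4 * (1 + n) * (1 + t)) := by ring
    _ = _ := by
        rw [Real.logb_mul (by positivity) (by positivity), Real.logb_pow,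
          Real.logb_self_eq_one hq, mul_one, Nat.cast_mul, Nat.cast_sub (by omega),
          Nat.cast_sub ht]

/-- for `n ≤ m/2` (and `t ≤ n`), the capacity (in `q`-ary units) of the
additive-multiplicative matrix channel satisfies
`C ≤ (m-n)(n-t) + log_q 4(1+n)(1+t)`. -/
theorem stmt_16 (F : Type) [Field F] [Fintype F] (n m t : ℕ)
    (hnm : 2 * n ≤ m) (ht : t ≤ n) :
    capacityB (Fintype.card F) (ammcKernel F n m t)
      ≤ ((m : ℝ) - n) * ((n : ℝ) - t) +
          Real.logb (Fintype.card F) (4 * (1 + (n : ℝ)) * (1 + (t : ℝ))) :=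
  stmt_16_general F n m t ht (by omega) (by omega)
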